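/- Let 𝒢 be a finite connected simple graph with one fixed ribbon structure and basis (b_0, b_0b_1) used for all facet graphs, and let J(𝒢) be the set of Jaeger trees of all facet graphs of 𝒢. Then for every (possibly empty) set {e_1, …, e_r} of directed edges there is at most one Jaeger tree T ∈ J(𝒢) whose set of tail-edges is exactly {e_1, …, e_r}. -/

import Mathlib

open scoped Classical Pointwise

namespace SEP

variable {V : Type*} [Fintype V] [DecidableEq V]

/-- The undirected simple graph underlying a set of directed edges. -/
def fromDir (D : Set (V × V)) : SimpleGraph V :=
  SimpleGraph.fromRel (fun u v => (u, v) ∈ D)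

/-- A layering of a simple graph `G`: the layer difference along each edge is at most one,
and the edges with layer difference exactly one form a connected spanning subgraph. -/
structure IsLayering (G : SimpleGraph V) (l : V → ℤ) : Prop where
  step : ∀ ⦃u v⦄, G.Adj u v → |l u - l v| ≤ 1
  conn : (SimpleGraph.fromRel fun u v => G.Adj u v ∧ |l u - l v| = 1).Connected

/-- The facet graph (as a set of directed edges) associated to a layering. -/
def facetDigraph (G : SimpleGraph V) (l : V → ℤ) : Set (V × V) :=
  {p | G.Adj p.1 p.2 ∧ l p.2 - l p.1 = 1}

/-- `D` is a facet graph of `G`. -/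
def IsFacetGraph (G : SimpleGraph V) (D : Set (V × V)) : Prop :=
  ∃ l : V → ℤ, IsLayering G l ∧ D = facetDigraph G l

/-- A ribbon structure on `G`: at each vertex a cyclic permutation of the incident edges,
encoded by the "next neighbour" function `ρ`. -/
structure IsRibbon (G : SimpleGraph V) (ρ : V → V → V) : Prop where
  adj : ∀ ⦃x y⦄, G.Adj x y → G.Adj x (ρ x y)
  cyc : ∀ ⦃x y z⦄, G.Adj x y → G.Adj x z → ∃ k : ℕ, (ρ x)^[k] y = z

/-- One step of the Bernardi tour of the tree with (undirected) edge set `T`: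
from the node–edge pair (x, xy) move to (y, yx⁺) if xy is a tree edge
and to (x, xy⁺) otherwise. -/
noncomputable def tourStep (ρ : V → V → V) (T : Set (Sym2 V)) (p : V × V) : V × V :=
  if s(p.1, p.2) ∈ T then (p.2, ρ p.2 p.1) else (p.1, ρ p.1 p.2)

/-- The tour of the tree `T`, starting at the basis `(b0, b0b1)`. -/
noncomputable def tourSeq (ρ : V → V → V) (T : Set (Sym2 V)) (b0 b1 : V) (n : ℕ) : V × V :=
  (tourStep ρ T)^[n] (b0, b1)

/-- The first time the node–edge pair (x, edge xy) becomes current in the tour of `T`. -/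
noncomputable def firstVisit (ρ : V → V → V) (T : Set (Sym2 V)) (b0 b1 x y : V) : ℕ :=
  sInf {n | tourSeq ρ T b0 b1 n = (x, y)}

/-- The undirected edge set of a set of directed edges. -/
def und (T : Set (V × V)) : Set (Sym2 V) := {e | ∃ p ∈ T, e = s(p.1, p.2)}

/-- `T` is a spanning tree of the digraph `D`, recorded with its orientation. -/
def IsSpanningTreeOf (T D : Set (V × V)) : Prop :=
  T ⊆ D ∧ (fromDir T).IsTree

/-- `T` is a Jaeger tree of the digraph `D` with respect to the ribbon structure `ρ` and the
basis `(b0, b1)`: it is a spanning tree of `D` and every directed edge t→h of `D` not in `T`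
is first reached at its tail `t` in the tour of `T`. -/
def IsJaegerTree (ρ : V → V → V) (b0 b1 : V) (D T : Set (V × V)) : Prop :=
  IsSpanningTreeOf T D ∧
    ∀ p ∈ D, s(p.1, p.2) ∉ und T →
      firstVisit ρ (und T) b0 b1 p.1 p.2 < firstVisit ρ (und T) b0 b1 p.2 p.1

/-- The directed edge `p = (t, h)` of `T` is a tail-edge of `T` w.r.t. the base vertex `b0`:
`b0` and `t` lie in the same component of `T - th`. -/
def IsTailEdge (b0 : V) (T : Set (V × V)) (p : V × V) : Prop :=
  p ∈ T ∧ (fromDir (T \ {p})).Reachable b0 p.1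

/-- The set of tail-edges of `T`. -/
def tailEdges (b0 : V) (T : Set (V × V)) : Set (V × V) :=
  {p | IsTailEdge b0 T p}

/-- The number of tail-edges of `T`. -/
noncomputable def numTailEdges (b0 : V) (T : Set (V × V)) : ℕ :=
  Nat.card (tailEdges b0 T)

/-- The ordering `≺` of Jaeger trees of one facet graph: `T' ≺ T` iff their tours first
differ at a current node–edge pair `(t, th)` with the directed edge `th ∉ T'` and `th ∈ T`. -/
def treePrec (ρ : V → V → V) (b0 b1 : V) (T' T : Set (V × V)) : Prop :=
  ∃ n : ℕ, (∀ m ≤ n, tourSeq ρ (und T') b0 b1 m = tourSeq ρ (und T) b0 b1 m) ∧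
    tourSeq ρ (und T) b0 b1 n ∈ T ∧ tourSeq ρ (und T) b0 b1 n ∉ T'

/-- The standard basis vector of `ℝ^V` corresponding to a vertex. -/
noncomputable def stdVec (v : V) : V → ℝ := fun w => if w = v then 1 else 0

/-- The symmetric edge polytope of `G`. -/
noncomputable def symEdgePolytope (G : SimpleGraph V) : Set (V → ℝ) :=
  convexHull ℝ {x | ∃ u v, G.Adj u v ∧ x = stdVec u - stdVec v}

/-- The (root polytope) simplex spanned by a set of directed edges. -/
noncomputable def simplexOf (T : Set (V × V)) : Set (V → ℝ) :=
  convexHull ℝ {x | ∃ p ∈ T, x = stdVec p.2 - stdVec p.1}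

/-- A weight function with base vertex `b0`. -/
structure IsWeight (b0 : V) (f : V → ℝ) : Prop where
  base : f b0 = 1
  lb : ∀ v, v ≠ b0 → -1 ≤ f v
  ub : ∀ v, v ≠ b0 → f v ≤ 0
  total : ∑ v ∈ Finset.univ.erase b0, f v = -1
  indep : LinearIndependent ℚ (fun v : {w : V // w ≠ b0} => f v.1)

/-- The number of lattice points of the `k`-th dilate of the symmetric edge polytope. -/
noncomputable def latticeCount (G : SimpleGraph V) (k : ℕ) : ℕ :=
  Nat.card {x : V → ℤ // (fun v => (x v : ℝ)) ∈ (k : ℝ) • symEdgePolytope G}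

/-- `s` is a side of a bipartition of `G`. -/
def IsBipartition (G : SimpleGraph V) (s : Set V) : Prop :=
  ∀ ⦃u v⦄, G.Adj u v → (u ∈ s ↔ v ∉ s)

/-- A digraph (set of directed edges) is semi-balanced if every cycle of the underlying
undirected graph has the same number of edges oriented in the two cyclic directions. -/
def IsSemiBalanced (D : Set (V × V)) : Prop :=
  ∀ ⦃v : V⦄ (w : (fromDir D).Walk v v), w.IsCycle →
    (w.darts.countP fun d => decide ((d.toProd.1, d.toProd.2) ∈ D)) =
      (w.darts.countP fun d => decide ((d.toProd.2, d.toProd.1) ∈ D))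

/-- `D` is an orientation of (all the edges of) `G`. -/
def IsOrientation (G : SimpleGraph V) (D : Set (V × V)) : Prop :=
  (∀ p ∈ D, G.Adj p.1 p.2) ∧ ∀ ⦃u v⦄, G.Adj u v → ((u, v) ∈ D ↔ (v, u) ∉ D)

/-- The state of the greedy process: the set `H` of included directed edges, the set of
node–edge pairs that have already been current, and the current node–edge pair. -/
structure GreedyState (V : Type*) where
  H : Set (V × V)
  seen : Set (V × V)
  cur : V × V

/-- One step of the (almost-)greedy process in the digraph `D`; `special` is the set of
directed edges that are exceptionally included when first reached at their tail
(`special = ∅` gives the greedy process, `special = {(u,v)}` the u→v-almost greedy one).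
Hidden edges (incident pairs whose edge is absent from `D`) are skipped. -/
noncomputable def greedyStep (D special : Set (V × V)) (ρ : V → V → V)
    (s : GreedyState V) : GreedyState V :=
  let x := s.cur.1
  let y := s.cur.2
  let seen' := s.seen ∪ {s.cur}
  if (y, x) ∈ D then
    -- the current node `x` is the head of the directed edge (y, x)
    if (y, x) ∈ s.seen then ⟨s.H, seen', (x, ρ x y)⟩
    else ⟨s.H ∪ {(y, x)}, seen', (y, ρ y x)⟩
  else if (x, y) ∈ D then
    -- the current node `x` is the tail of the directed edge (x, y)
    if s.cur ∈ special ∧ (y, x) ∉ s.seen then ⟨s.H ∪ {(x, y)}, seen', (y, ρ y x)⟩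
    else if (y, x) ∈ s.seen then ⟨s.H, seen', (y, ρ y x)⟩
    else ⟨s.H, seen', (x, ρ x y)⟩
  else ⟨s.H, seen', (x, ρ x y)⟩

/-- The sequence of states of the (almost-)greedy process started at the basis `(b0, b1)`. -/
noncomputable def greedySeq (D special : Set (V × V)) (ρ : V → V → V) (b0 b1 : V)
    (n : ℕ) : GreedyState V :=
  (greedyStep D special ρ)^[n] ⟨∅, ∅, (b0, b1)⟩

/-- The stopping time of the (almost-)greedy process: the first moment at which a node–edge
pair becomes current for the second time. -/
noncomputable def greedyStopTime (D special : Set (V × V)) (ρ : V → V → V) (b0 b1 : V) : ℕ :=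
  sInf {n | (greedySeq D special ρ b0 b1 n).cur ∈ (greedySeq D special ρ b0 b1 n).seen}

/-- The edge set produced by the (almost-)greedy process. -/
noncomputable def greedyOutput (D special : Set (V × V)) (ρ : V → V → V) (b0 b1 : V) :
    Set (V × V) :=
  (greedySeq D special ρ b0 b1 (greedyStopTime D special ρ b0 b1)).H

/-- The status of the current node–edge pair `p = (x, y)` (node `x`, edge `xy`) with respect
to a facet graph `D` and a tree `T ⊆ D`: `0` if the edge is in the tree oriented y→x,
`1` if it is hidden, `2` if it is oriented x→y in `D` but not in the tree, `3` if it is in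
the tree oriented x→y (and `4` in the remaining case: oriented y→x in `D` but not in `T`). -/
noncomputable def edgeStatus (D T : Set (V × V)) (p : V × V) : ℕ :=
  if (p.2, p.1) ∈ T then 0
  else if (p.1, p.2) ∈ T then 3
  else if (p.1, p.2) ∈ D then 2
  else if (p.2, p.1) ∈ D then 4
  else 1

/-- The quadratic order `<₄` on Jaeger trees (with their facet graphs): the tours, together
with the statuses of the current edges, agree up to step `n`, and at step `n` the status of
the current edge for the first tree is smaller than for the second one. -/
def quadLT (ρ : V → V → V) (b0 b1 : V) (q q' : Set (V × V) × Set (V × V)) : Prop :=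
  ∃ n : ℕ,
    (∀ m < n, tourSeq ρ (und q.2) b0 b1 m = tourSeq ρ (und q'.2) b0 b1 m ∧
      edgeStatus q.1 q.2 (tourSeq ρ (und q.2) b0 b1 m) =
        edgeStatus q'.1 q'.2 (tourSeq ρ (und q'.2) b0 b1 m)) ∧
    tourSeq ρ (und q.2) b0 b1 n = tourSeq ρ (und q'.2) b0 b1 n ∧
    edgeStatus q.1 q.2 (tourSeq ρ (und q.2) b0 b1 n) <
      edgeStatus q'.1 q'.2 (tourSeq ρ (und q'.2) b0 b1 n)

end SEP

/-!
Two Jaeger trees `T` and `T'` already coincide if each contains the tail-edges of the other.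

*The facet graphs agree.* Let `l` and `l'` be layerings whose facet graphs contain `T` and `T'`.
Along an edge of `T'` the layering `l'` grows by one and `l` by at most one, so `l' - l` is
nondecreasing along the edges of `T'`; along the tail-edges of `T'`, which lie in `T`, it is
constant. Walking in `T'` towards `b0`, every edge is followed in its direction unless it is a
tail-edge, hence `l' - l ≤ l' b0 - l b0`. By symmetry `l' - l` is constant.

*The trees agree.* Suppose that the tours of `T` and `T'` first differ at the current pair
`(x, xy)`, with `xy` in `T` but not in `T'`. This is the first visit to the edge `xy`. If it is
directed from `x` to `y`, then it is a tail-edge of `T`, hence lies in `T'`. If it is directed from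
`y` to `x`, then the tour of `T'` reaches it first at its head, so the Jaeger property puts it into
`T'`. Either way this is a contradiction, so the tours make the same moves, and since they visit all
node–edge pairs, the trees have the same edges.
-/

namespace SEP

section

variable {V : Type*} {G H : SimpleGraph V} {D D' T T' : Set (V × V)} {E E' : Set (Sym2 V)}
  {ρ : V → V → V} {b0 b1 x y : V} {p q r : V × V} {n : ℕ}

/-! ### Sets of directed edges -/

lemma mk_mem_und_iff : s(x, y) ∈ und T ↔ (x, y) ∈ T ∨ (y, x) ∈ T := by
  simp only [und, Prod.exists, Set.mem_ofPred_eq, Sym2.eq_iff]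
  aesop

lemma fromDir_adj_iff : (fromDir T).Adj x y ↔ x ≠ y ∧ s(x, y) ∈ und T := by
  rw [mk_mem_und_iff, fromDir, SimpleGraph.fromRel_adj]

lemma edgeSet_fromDir (hT : ∀ p ∈ T, p.1 ≠ p.2) : (fromDir T).edgeSet = und T := by
  ext ⟨x, y⟩
  rw [SimpleGraph.mem_edgeSet, fromDir_adj_iff, and_iff_right_iff_imp, mk_mem_und_iff]
  exact Or.rec (hT _) fun h => (hT _ h).symm

lemma deleteEdges_fromDir_le :
    (fromDir T).deleteEdges {s(x, y)} ≤ fromDir (T \ {(x, y)}) := by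
  intro u v huv
  simp only [SimpleGraph.deleteEdges_adj, fromDir_adj_iff, mk_mem_und_iff,
    Set.mem_singleton_iff, Sym2.eq_iff] at huv
  simp only [fromDir_adj_iff, mk_mem_und_iff, Set.mem_sdiff, Set.mem_singleton_iff, Prod.mk.injEq]
  tauto

lemma mem_tailEdges_of_reachable (hxy : (x, y) ∈ T)
    (hx : ((fromDir T).deleteEdges {s(x, y)}).Reachable b0 x) : (x, y) ∈ tailEdges b0 T :=
  ⟨hxy, hx.mono deleteEdges_fromDir_le⟩

lemma subset_of_und_subset_und (hD : ∀ x y, (x, y) ∈ D → (y, x) ∉ D) (hT : T ⊆ D) (hT' : T' ⊆ D)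
    (h : und T ⊆ und T') : T ⊆ T' := by
  rintro ⟨x, y⟩ hxy
  have hxy' : s(x, y) ∈ und T' := h (mk_mem_und_iff.2 (.inl hxy))
  exact (mk_mem_und_iff.1 hxy').resolve_right fun hyx => hD x y (hT hxy) (hT' hyx)

/-! ### Tail-edges determine the facet graph -/

lemma le_base_of_tailEdges {α : Type*} [Preorder α] {d : V → α}
    (hT : (fromDir T).Preconnected) (hmono : ∀ u v, (u, v) ∈ T → d u ≤ d v)
    (htail : ∀ u v, (u, v) ∈ tailEdges b0 T → d v ≤ d u) (v : V) : d v ≤ d b0 := by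
  obtain ⟨w, hw⟩ := (hT v b0).exists_isPath
  induction w with
  | nil => exact le_rfl
  | @cons v u b0 hvu w ih =>
    obtain ⟨hw, hv⟩ := SimpleGraph.Walk.cons_isPath_iff _ _ |>.1 hw
    suffices d v ≤ d u from this.trans (ih htail hw)
    obtain h | h := mk_mem_und_iff.1 (fromDir_adj_iff.1 hvu).2
    · exact hmono v u h
    · have hvw : s(u, v) ∉ w.edges := fun h => hv (w.snd_mem_support_of_mem_edges h)
      exact htail u v (mem_tailEdges_of_reachable h (w.toDeleteEdge _ hvw).reachable.symm)

lemma sub_layer_le_sub_layer_base {l l' : V → ℤ} (hl : ∀ ⦃u v⦄, G.Adj u v → |l u - l v| ≤ 1)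
    (hT : (fromDir T).Preconnected) (hTl' : T ⊆ facetDigraph G l')
    (htail : tailEdges b0 T ⊆ facetDigraph G l) (v : V) : l' v - l v ≤ l' b0 - l b0 := by
  refine le_base_of_tailEdges (d := fun v => l' v - l v) hT (fun u v huv => ?_)
    (fun u v huv => ?_) v
  · obtain ⟨hadj, hl'uv⟩ := hTl' huv
    have hluv := abs_le.1 (hl hadj)
    lia
  · have hl'uv := (hTl' huv.1).2
    have hluv := (htail huv).2
    lia

lemma IsFacetGraph.eq_of_tailEdges_subset (hD : IsFacetGraph G D) (hD' : IsFacetGraph G D')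
    (hT : IsSpanningTreeOf T D) (hT' : IsSpanningTreeOf T' D')
    (htail : tailEdges b0 T ⊆ D') (htail' : tailEdges b0 T' ⊆ D) : D = D' := by
  obtain ⟨l, hl, rfl⟩ := hD
  obtain ⟨l', hl', rfl⟩ := hD'
  have hle := sub_layer_le_sub_layer_base hl.step hT'.2.connected.preconnected hT'.1 htail'
  have hge := sub_layer_le_sub_layer_base hl'.step hT.2.connected.preconnected hT.1 htail
  ext ⟨x, y⟩
  refine and_congr_right fun _ => ?_
  have := hle x
  have := hge x
  have := hle y
  have := hge y
  lia

lemma IsFacetGraph.adj (hD : IsFacetGraph G D) (hp : p ∈ D) : G.Adj p.1 p.2 := by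
  obtain ⟨l, -, rfl⟩ := hD
  exact hp.1

lemma IsFacetGraph.asymm (hD : IsFacetGraph G D) (hxy : (x, y) ∈ D) : (y, x) ∉ D := by
  obtain ⟨l, -, rfl⟩ := hD
  intro hyx
  have := hxy.2
  have := hyx.2
  lia

/-! ### Tours of spanning trees visit every node–edge pair -/

lemma tourStep_of_mem (h : s(x, y) ∈ E) : tourStep ρ E (x, y) = (y, ρ y x) := if_pos h

lemma tourStep_of_notMem (h : s(x, y) ∉ E) : tourStep ρ E (x, y) = (x, ρ x y) := if_neg h

lemma IsRibbon.mapsTo_tourStep (hρ : IsRibbon G ρ) (E : Set (Sym2 V)) :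
    Set.MapsTo (tourStep ρ E) {p | G.Adj p.1 p.2} {p | G.Adj p.1 p.2} := by
  rintro ⟨x, y⟩ (hxy : G.Adj x y)
  by_cases hE : s(x, y) ∈ E
  · rw [tourStep_of_mem hE]
    exact hρ.adj hxy.symm
  · rw [tourStep_of_notMem hE]
    exact hρ.adj hxy

lemma IsRibbon.mapsTo_neighborSet (hρ : IsRibbon G ρ) (x : V) :
    Set.MapsTo (ρ x) (G.neighborSet x) (G.neighborSet x) :=
  fun _ hy => hρ.adj hy

lemma IsRibbon.surjOn_neighborSet (hρ : IsRibbon G ρ) (x : V) :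
    Set.SurjOn (ρ x) (G.neighborSet x) (G.neighborSet x) := by
  intro z hz
  obtain ⟨k, hk⟩ := hρ.cyc (hρ.adj hz) hz
  refine ⟨(ρ x)^[k] z, (hρ.mapsTo_neighborSet x).iterate k hz, ?_⟩
  rwa [← Function.iterate_succ_apply' (ρ x), Function.iterate_succ_apply]

lemma IsRibbon.surjOn_tourStep (hρ : IsRibbon G ρ) (E : Set (Sym2 V)) :
    Set.SurjOn (tourStep ρ E) {p | G.Adj p.1 p.2} {p | G.Adj p.1 p.2} := by
  rintro ⟨x, z⟩ (hxz : G.Adj x z)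
  obtain ⟨w, hxw, rfl⟩ := hρ.surjOn_neighborSet x hxz
  by_cases hE : s(x, w) ∈ E
  · exact ⟨(w, x), hxw.symm, tourStep_of_mem (Sym2.eq_swap ▸ hE)⟩
  · exact ⟨(x, w), hxw, tourStep_of_notMem hE⟩

lemma subset_periodicPts_of_surjOn {α : Type*} {f : α → α} {s : Set α} (hs : s.Finite)
    (hmaps : Set.MapsTo f s s) (hsurj : Set.SurjOn f s s) : s ⊆ Function.periodicPts f := by
  intro a ha
  have := hs.to_subtype
  have hinj : Function.Injective (hmaps.restrict f s s) :=
    Finite.injective_iff_surjective.2 (hmaps.restrict_surjective_iff.2 hsurj)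
  obtain ⟨k, hk, hper⟩ := hinj.mem_periodicPts ⟨a, ha⟩
  exact ⟨k, hk, hper.map (g := Subtype.val) fun _ => rfl⟩

lemma reachable_fst_iterate_tourStep
    (h : ∀ m < n, ∀ x y, (tourStep ρ E)^[m] p = (x, y) → s(x, y) ∈ E → H.Reachable x y) :
    H.Reachable p.1 ((tourStep ρ E)^[n] p).1 := by
  induction n with
  | zero => rfl
  | succ n ih =>
    have hn := ih fun m hm => h m (hm.trans n.lt_succ_self)
    rw [Function.iterate_succ_apply']
    rcases hxy : (tourStep ρ E)^[n] p with ⟨x, y⟩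
    rw [hxy] at hn
    by_cases hE : s(x, y) ∈ E
    · rw [tourStep_of_mem hE]
      exact hn.trans (h n n.lt_succ_self x y hxy hE)
    · rwa [tourStep_of_notMem hE]

/-- The tour with edge set `E` that starts at the node–edge pair `p` arrives at the pair `q` after
finitely many (possibly zero) steps. -/
def TourReaches (ρ : V → V → V) (E : Set (Sym2 V)) (p q : V × V) : Prop :=
  ∃ n, (tourStep ρ E)^[n] p = q

namespace TourReaches

lemma refl (p : V × V) : TourReaches ρ E p p := ⟨0, rfl⟩

lemma tourStep (p : V × V) : TourReaches ρ E p (SEP.tourStep ρ E p) := ⟨1, rfl⟩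

lemma trans (hpq : TourReaches ρ E p q) (hqr : TourReaches ρ E q r) : TourReaches ρ E p r := by
  obtain ⟨m, rfl⟩ := hpq
  obtain ⟨n, rfl⟩ := hqr
  exact ⟨n + m, Function.iterate_add_apply _ n m p⟩

end TourReaches

/-- After crossing a bridge the tour stays on the far side until it crosses back, and it has to do
so because it is periodic. -/
lemma IsRibbon.tourReaches_swap_of_isBridge [Finite V] (hρ : IsRibbon G ρ) (hG : G.Adj x y)
    (hH : H.Adj x y) (hbridge : H.IsBridge s(x, y)) :
    TourReaches ρ H.edgeSet (x, y) (y, x) := by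
  set f := tourStep ρ H.edgeSet
  have hstep : f (x, y) = (y, ρ y x) := tourStep_of_mem hH
  obtain ⟨k, hk, hper⟩ : (x, y) ∈ Function.periodicPts f :=
    subset_periodicPts_of_surjOn (Set.toFinite _) (hρ.mapsTo_tourStep _) (hρ.surjOn_tourStep _) hG
  obtain ⟨k, rfl⟩ := Nat.exists_eq_add_one_of_ne_zero hk.ne'
  have hrecurs : ∃ n, s((f^[n] (y, ρ y x)).1, (f^[n] (y, ρ y x)).2) = s(x, y) := by
    refine ⟨k, ?_⟩
    rw [← hstep, ← Function.iterate_succ_apply, hper.eq]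
  have hside : (H.deleteEdges {s(x, y)}).Reachable y (f^[Nat.find hrecurs] (y, ρ y x)).1 := by
    refine reachable_fst_iterate_tourStep (p := (y, ρ y x)) fun m hm u v huv hE => ?_
    have hne : s(u, v) ≠ s(x, y) := by simpa only [f, huv] using Nat.find_min hrecurs hm
    exact (SimpleGraph.deleteEdges_adj.2 ⟨hE, hne⟩).reachable
  refine ⟨Nat.find hrecurs + 1, ?_⟩
  rw [Function.iterate_succ_apply f, hstep]
  obtain ⟨hx, -⟩ | ⟨hy, hx⟩ := Sym2.eq_iff.1 (Nat.find_spec hrecurs)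
  · rw [hx] at hside
    exact absurd hside.symm (SimpleGraph.isBridge_iff.1 hbridge)
  · exact Prod.ext hy hx

lemma IsRibbon.tourReaches_next [Finite V] (hρ : IsRibbon G ρ) (hH : H.IsAcyclic)
    (hG : G.Adj x y) : TourReaches ρ H.edgeSet (x, y) (x, ρ x y) := by
  by_cases hxy : H.Adj x y
  · have hback := hρ.tourReaches_swap_of_isBridge hG hxy
      (SimpleGraph.isAcyclic_iff_forall_adj_isBridge.1 hH hxy)
    have hturn := TourReaches.tourStep (ρ := ρ) (E := H.edgeSet) (y, x)
    rw [tourStep_of_mem hxy.symm] at hturn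
    exact hback.trans hturn
  · have hturn := TourReaches.tourStep (ρ := ρ) (E := H.edgeSet) (x, y)
    rwa [tourStep_of_notMem hxy] at hturn

lemma IsRibbon.tourReaches_of_fst_eq [Finite V] (hρ : IsRibbon G ρ) (hH : H.IsAcyclic) {z : V}
    (hxy : G.Adj x y) (hxz : G.Adj x z) : TourReaches ρ H.edgeSet (x, y) (x, z) := by
  obtain ⟨k, rfl⟩ := hρ.cyc hxy hxz
  clear hxz
  induction k with
  | zero => exact .refl _
  | succ k ih =>
    have hadj : G.Adj x ((ρ x)^[k] y) := (hρ.mapsTo_neighborSet x).iterate k hxy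
    rw [Function.iterate_succ_apply']
    exact ih.trans (hρ.tourReaches_next hH hadj)

lemma IsRibbon.tourReaches_of_isTree [Finite V] (hρ : IsRibbon G ρ) (hHG : H ≤ G) (hH : H.IsTree)
    (hp : G.Adj p.1 p.2) (hq : G.Adj q.1 q.2) : TourReaches ρ H.edgeSet p q := by
  obtain ⟨x, y⟩ := p
  obtain ⟨z, t⟩ := q
  obtain ⟨w⟩ := hH.connected.preconnected x z
  induction w generalizing y with
  | nil => exact hρ.tourReaches_of_fst_eq hH.isAcyclic hp hq
  | @cons x u z hxu _ ih =>
    have hcross := hρ.tourReaches_swap_of_isBridge (hHG hxu) hxu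
      (SimpleGraph.isAcyclic_iff_forall_adj_isBridge.1 hH.isAcyclic hxu)
    exact ((hρ.tourReaches_of_fst_eq hH.isAcyclic hp (hHG hxu)).trans hcross).trans
      (ih x (hHG hxu).symm hq)

lemma IsSpanningTreeOf.tourReaches [Finite V] (hT : IsSpanningTreeOf T D) (hρ : IsRibbon G ρ)
    (hD : ∀ p ∈ D, G.Adj p.1 p.2) (hp : G.Adj p.1 p.2) (hq : G.Adj q.1 q.2) :
    TourReaches ρ (und T) p q := by
  have hund : (fromDir T).edgeSet = und T := edgeSet_fromDir fun p hp => (hD p (hT.1 hp)).ne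
  have hTG : fromDir T ≤ G := by
    intro x y hxy
    obtain h | h := mk_mem_und_iff.1 (fromDir_adj_iff.1 hxy).2
    · exact hD _ (hT.1 h)
    · exact (hD _ (hT.1 h)).symm
  exact hund ▸ hρ.tourReaches_of_isTree hTG hT.2 hp hq

/-! ### Comparing the tours of two Jaeger trees -/

/-- The current edge at time `n` of the tour that starts at `(b0, b1)`. The tour crosses it if it
belongs to `E`, and turns to the next edge at the same node otherwise. -/
noncomputable def tourEdge (ρ : V → V → V) (E : Set (Sym2 V)) (b0 b1 : V) (n : ℕ) : Sym2 V :=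
  s((tourSeq ρ E b0 b1 n).1, (tourSeq ρ E b0 b1 n).2)

lemma tourSeq_succ :
    tourSeq ρ E b0 b1 (n + 1) = tourStep ρ E (tourSeq ρ E b0 b1 n) :=
  Function.iterate_succ_apply' _ _ _

lemma tourEdge_eq_of_tourSeq_eq (h : tourSeq ρ E b0 b1 n = (x, y)) :
    tourEdge ρ E b0 b1 n = s(x, y) := by
  rw [tourEdge, h]

lemma tourSeq_congr
    (h : ∀ m < n, tourEdge ρ E b0 b1 m ∈ E ↔ tourEdge ρ E' b0 b1 m ∈ E') :
    tourSeq ρ E b0 b1 n = tourSeq ρ E' b0 b1 n := by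
  induction n with
  | zero => rfl
  | succ n ih =>
    have hn := ih fun m hm => h m (hm.trans n.lt_succ_self)
    have hcross := h n n.lt_succ_self
    simp only [tourEdge, ← hn] at hcross
    simp only [tourSeq_succ, ← hn, tourStep, hcross]

lemma tourEdge_congr
    (h : ∀ m < n, tourEdge ρ E b0 b1 m ∈ E ↔ tourEdge ρ E' b0 b1 m ∈ E') :
    tourEdge ρ E b0 b1 n = tourEdge ρ E' b0 b1 n := by
  rw [tourEdge, tourEdge, tourSeq_congr h]

lemma mem_tailEdges_of_tourSeq_eq (hxy : (x, y) ∈ T) (hn : tourSeq ρ (und T) b0 b1 n = (x, y))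
    (hfirst : ∀ m < n, tourEdge ρ (und T) b0 b1 m ≠ s(x, y)) : (x, y) ∈ tailEdges b0 T := by
  refine mem_tailEdges_of_reachable hxy ?_
  have hreach : ((fromDir T).deleteEdges {s(x, y)}).Reachable b0 (tourSeq ρ (und T) b0 b1 n).1 := by
    refine reachable_fst_iterate_tourStep (p := (b0, b1)) fun m hm u v huv hE => ?_
    obtain rfl | hne := eq_or_ne u v
    · rfl
    · have hadj : (fromDir T).Adj u v := fromDir_adj_iff.2 ⟨hne, hE⟩
      have hedge : s(u, v) ≠ s(x, y) := tourEdge_eq_of_tourSeq_eq huv ▸ hfirst m hm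
      exact (SimpleGraph.deleteEdges_adj.2 ⟨hadj, hedge⟩).reachable
  rwa [hn] at hreach

lemma IsJaegerTree.mem_und_of_tourSeq_eq (hT : IsJaegerTree ρ b0 b1 D T) (hyx : (y, x) ∈ D)
    (hvisit : TourReaches ρ (und T) (b0, b1) (y, x)) (hn : tourSeq ρ (und T) b0 b1 n = (x, y))
    (hfirst : ∀ m < n, tourEdge ρ (und T) b0 b1 m ≠ s(x, y)) : s(x, y) ∈ und T := by
  by_contra hnot
  have htail : tourSeq ρ (und T) b0 b1 (firstVisit ρ (und T) b0 b1 y x) = (y, x) :=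
    Nat.sInf_mem (s := {n | tourSeq ρ (und T) b0 b1 n = (y, x)}) hvisit
  have hlt : firstVisit ρ (und T) b0 b1 y x < n :=
    calc firstVisit ρ (und T) b0 b1 y x
        < firstVisit ρ (und T) b0 b1 x y := hT.2 (y, x) hyx (Sym2.eq_swap ▸ hnot)
      _ ≤ n := Nat.sInf_le hn
  exact hfirst _ hlt ((tourEdge_eq_of_tourSeq_eq htail).trans Sym2.eq_swap)

lemma IsJaegerTree.tourEdge_mem_of_agree (hT' : IsJaegerTree ρ b0 b1 D T') (hTD : T ⊆ D)
    (hvisit : ∀ p ∈ D, TourReaches ρ (und T') (b0, b1) p) (htail : tailEdges b0 T ⊆ T')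
    (hagree : ∀ m < n,
      tourEdge ρ (und T) b0 b1 m ∈ und T ↔ tourEdge ρ (und T') b0 b1 m ∈ und T')
    (hn : tourEdge ρ (und T) b0 b1 n ∈ und T) : tourEdge ρ (und T') b0 b1 n ∈ und T' := by
  have hedge : ∀ m ≤ n, tourEdge ρ (und T) b0 b1 m = tourEdge ρ (und T') b0 b1 m :=
    fun m hm => tourEdge_congr fun k hk => hagree k (hk.trans_le hm)
  rw [← hedge n le_rfl]
  by_cases hfirst : ∀ m < n, tourEdge ρ (und T) b0 b1 m ≠ tourEdge ρ (und T) b0 b1 n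
  · rcases hxy : tourSeq ρ (und T) b0 b1 n with ⟨x, y⟩
    rw [tourEdge_eq_of_tourSeq_eq hxy] at hn hfirst ⊢
    obtain h | h := mk_mem_und_iff.1 hn
    · exact mk_mem_und_iff.2 (.inl (htail (mem_tailEdges_of_tourSeq_eq h hxy hfirst)))
    · exact hT'.mem_und_of_tourSeq_eq (hTD h) (hvisit _ (hTD h)) (tourSeq_congr hagree ▸ hxy)
        fun m hm => hedge m hm.le ▸ hfirst m hm
  · push Not at hfirst
    obtain ⟨m, hm, hmn⟩ := hfirst
    rw [← hmn, hedge m hm.le]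
    exact (hagree m hm).1 (hmn ▸ hn)

lemma IsJaegerTree.tourEdge_mem_iff (hT : IsJaegerTree ρ b0 b1 D T)
    (hT' : IsJaegerTree ρ b0 b1 D T') (hvisit : ∀ p ∈ D, TourReaches ρ (und T) (b0, b1) p)
    (hvisit' : ∀ p ∈ D, TourReaches ρ (und T') (b0, b1) p) (htail : tailEdges b0 T ⊆ T')
    (htail' : tailEdges b0 T' ⊆ T) (n : ℕ) :
    tourEdge ρ (und T) b0 b1 n ∈ und T ↔ tourEdge ρ (und T') b0 b1 n ∈ und T' := by
  induction n using Nat.strong_induction_on with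
  | _ n ih =>
    exact ⟨hT'.tourEdge_mem_of_agree hT.1.1 hvisit' htail ih,
      hT.tourEdge_mem_of_agree hT'.1.1 hvisit htail' fun m hm => (ih m hm).symm⟩

lemma und_subset_und_of_tourEdge_mem_iff (hvisit : ∀ p ∈ T, TourReaches ρ (und T) (b0, b1) p)
    (h : ∀ n, tourEdge ρ (und T) b0 b1 n ∈ und T ↔ tourEdge ρ (und T') b0 b1 n ∈ und T') :
    und T ⊆ und T' := by
  rintro _ ⟨⟨x, y⟩, hxy, rfl⟩
  obtain ⟨n, hn⟩ := hvisit _ hxy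
  have hedge := tourEdge_eq_of_tourSeq_eq hn
  have hcross : tourEdge ρ (und T) b0 b1 n ∈ und T := hedge ▸ mk_mem_und_iff.2 (.inl hxy)
  rw [← hedge, tourEdge_congr fun m _ => h m]
  exact (h n).1 hcross

theorem IsJaegerTree.subset_of_tailEdges_subset [Finite V] (hρ : IsRibbon G ρ)
    (hb : G.Adj b0 b1) (hD : ∀ p ∈ D, G.Adj p.1 p.2) (hasymm : ∀ x y, (x, y) ∈ D → (y, x) ∉ D)
    (hT : IsJaegerTree ρ b0 b1 D T) (hT' : IsJaegerTree ρ b0 b1 D T')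
    (htail : tailEdges b0 T ⊆ T') (htail' : tailEdges b0 T' ⊆ T) : T ⊆ T' := by
  have hvisit : ∀ p ∈ D, TourReaches ρ (und T) (b0, b1) p :=
    fun p hp => hT.1.tourReaches hρ hD hb (hD p hp)
  have hvisit' : ∀ p ∈ D, TourReaches ρ (und T') (b0, b1) p :=
    fun p hp => hT'.1.tourReaches hρ hD hb (hD p hp)
  have hmoves := hT.tourEdge_mem_iff hT' hvisit hvisit' htail htail'
  exact subset_of_und_subset_und hasymm hT.1.1 hT'.1.1
    (und_subset_und_of_tourEdge_mem_iff (fun p hp => hvisit p (hT.1.1 hp)) hmoves)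

theorem at_most_one_stick_tree_general [Finite V] (hρ : IsRibbon G ρ) (hb : G.Adj b0 b1)
    (hD : IsFacetGraph G D) (hD' : IsFacetGraph G D') (hT : IsJaegerTree ρ b0 b1 D T)
    (hT' : IsJaegerTree ρ b0 b1 D' T') (htail : tailEdges b0 T ⊆ T')
    (htail' : tailEdges b0 T' ⊆ T) : T = T' := by
  obtain rfl : D = D' := hD.eq_of_tailEdges_subset hD' hT.1 hT'.1
    (htail.trans hT'.1.1) (htail'.trans hT.1.1)
  have hadj : ∀ p ∈ D, G.Adj p.1 p.2 := fun _ => hD.adj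
  have hasymm : ∀ x y, (x, y) ∈ D → (y, x) ∉ D := fun _ _ => hD.asymm
  exact (hT.subset_of_tailEdges_subset hρ hb hadj hasymm hT' htail htail').antisymm
    (hT'.subset_of_tailEdges_subset hρ hb hadj hasymm hT htail' htail)

end

/-- For every (possibly empty) set of directed edges there is at most one Jaeger tree of a
facet graph of `G` whose set of tail-edges is exactly that set. -/
theorem at_most_one_stick_tree
    {V : Type*} [Fintype V] [DecidableEq V]
    (G : SimpleGraph V) (hG : G.Connected)
    (ρ : V → V → V) (hrib : IsRibbon G ρ) (b0 b1 : V) (hb : G.Adj b0 b1)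
    (J : Set (Set (V × V)))
    (hJ : J = {T | ∃ D : Set (V × V), IsFacetGraph G D ∧ IsJaegerTree ρ b0 b1 D T}) :
    ∀ S : Finset (V × V), ∀ T ∈ J, ∀ T' ∈ J,
      tailEdges b0 T = ↑S → tailEdges b0 T' = ↑S → T = T' := by
  subst hJ
  rintro S T ⟨D, hD, hT⟩ T' ⟨D', hD', hT'⟩ hS hS'
  exact at_most_one_stick_tree_general hrib hb hD hD' hT hT'
    (hS.trans hS'.symm ▸ fun _ hp => hp.1) (hS'.trans hS.symm ▸ fun _ hp => hp.1)

end SEP
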